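/- For every real λ with 0 ≤ λ < 1 and every real ξ with ξ ≥ −1, we have ln(1 + λ·ξ) ≥ λ·ξ + (ln(1−λ) + λ)·ξ². (Note λ·ξ ≥ −λ > −1, so the left side is well defined.) -/

import Mathlib

/-!
Integrating `d/ds (s x - log (1 + s x)) = x² s / (1 + s x)` over `[0, t]` writes
`t x - log (1 + t x)` as `x² I(x)`, where for `t ≥ 0` the integral `I(x)` is antitone in `x`.
With `t = lam`, the claim is `ξ² I(ξ) ≤ ξ² I(-1)`.
-/

open Set intervalIntegral
open scoped Interval

section LogIntegral

variable {s t x y : ℝ}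

lemma one_add_mul_pos_of_mem_uIcc (ht : 0 < 1 + t * x) (hs : s ∈ [[0, t]]) : 0 < 1 + s * x := by
  have hsx : s * x ∈ [[0, t * x]] := by
    rw [← zero_mul x, ← image_mul_const_uIcc]
    exact mem_image_of_mem (· * x) hs
  have hmin : -1 < min 0 (t * x) := lt_min (by norm_num) (by linarith)
  linarith [hsx.1]

lemma intervalIntegrable_div_one_add_mul (ht : 0 < 1 + t * x) :
    IntervalIntegrable (fun s ↦ s / (1 + s * x)) MeasureTheory.volume 0 t :=
  ContinuousOn.intervalIntegrable <| continuousOn_id.div (by fun_prop) fun _ hs ↦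
    (one_add_mul_pos_of_mem_uIcc ht hs).ne'

lemma hasDerivAt_mul_sub_log_one_add_mul (hs : 1 + s * x ≠ 0) :
    HasDerivAt (fun s ↦ s * x - Real.log (1 + s * x)) (x ^ 2 * (s / (1 + s * x))) s := by
  have hmul : HasDerivAt (fun s ↦ s * x) x s := hasDerivAt_mul_const x
  have hderiv : x ^ 2 * (s / (1 + s * x)) = x - x / (1 + s * x) := by
    rw [← mul_div_assoc, eq_sub_iff_add_eq, ← add_div, div_eq_iff hs]
    ring
  exact hderiv ▸ hmul.sub ((hmul.const_add 1).log hs)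

theorem sq_mul_integral_div_one_add_mul (ht : 0 < 1 + t * x) :
    x ^ 2 * ∫ s in 0..t, s / (1 + s * x) = t * x - Real.log (1 + t * x) := by
  rw [← integral_const_mul, integral_eq_sub_of_hasDerivAt
    (fun s hs ↦ hasDerivAt_mul_sub_log_one_add_mul (one_add_mul_pos_of_mem_uIcc ht hs).ne')
    ((intervalIntegrable_div_one_add_mul ht).const_mul (x ^ 2))]
  simp

theorem integral_div_one_add_mul_anti (ht₀ : 0 ≤ t) (hx : 0 < 1 + t * x) (hxy : x ≤ y) :
    ∫ s in 0..t, s / (1 + s * y) ≤ ∫ s in 0..t, s / (1 + s * x) := by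
  have hy : 0 < 1 + t * y := hx.trans_le (by gcongr)
  refine integral_mono_on ht₀ (intervalIntegrable_div_one_add_mul hy)
    (intervalIntegrable_div_one_add_mul hx) fun s hs ↦ ?_
  have hs₀ : 0 ≤ s := hs.1
  have hsx : 0 < 1 + s * x := one_add_mul_pos_of_mem_uIcc hx (Icc_subset_uIcc hs)
  gcongr

end LogIntegral

theorem fan_exponential_inequality (lam ξ : ℝ) (hlam0 : 0 ≤ lam) (hlam1 : lam < 1)
    (hξ : ξ ≥ -1) :
    Real.log (1 + lam * ξ) ≥ lam * ξ + (Real.log (1 - lam) + lam) * ξ ^ 2 := by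
  have hneg : 0 < 1 + lam * (-1) := by linarith
  have hpos : 0 < 1 + lam * ξ := hneg.trans_le (by gcongr)
  have hintegral : ∫ s in 0..lam, s / (1 + s * (-1)) = -lam - Real.log (1 - lam) := by
    simpa [sub_eq_add_neg] using sq_mul_integral_div_one_add_mul hneg
  have hle : lam * ξ - Real.log (1 + lam * ξ) ≤ ξ ^ 2 * (-lam - Real.log (1 - lam)) := by
    rw [← sq_mul_integral_div_one_add_mul hpos, ← hintegral]
    gcongr ξ ^ 2 * ?_
    exact integral_div_one_add_mul_anti hlam0 hneg hξ
  linarith
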